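/- arXiv:2308.06576 — 2 statements merged into one kernel-verified Lean document; each statement's English description precedes it below -/
import Mathlib

section
/- Let n ≥ 2 and let 𝔹ⁿ = {x ∈ ℝⁿ : |x| < 1} be the unit ball, so that d_{𝔹ⁿ}(x) = 1 − |x|. For every c > 0, neither the function φᶜ(x,y) = |x−y|/(c·L(1−|x|, 1−|y|)) nor the function φ̂ᶜ(x,y) = log(1 + |x−y|/(c·L(1−|x|, 1−|y|))) is a metric on 𝔹ⁿ: in each case the triangle inequality fails for some triple of points of 𝔹ⁿ. -/
/-- The logarithmic mean of two positive reals. -/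
noncomputable def logMean (a b : ℝ) : ℝ :=
  if a = b then a else (a - b) / (Real.log a - Real.log b)

theorem key_exp (t : ℝ) (ht : 0 < t) :
    2 * t + t ^ 2 * (t / 3) < 2 * (Real.exp t - 1) := by
  have h := Real.sum_le_exp_of_nonneg ht.le 4
  norm_num [Finset.sum_range_succ, Nat.factorial] at h
  nlinarith [pow_pos ht 2]

theorem logMean_exp (t : ℝ) (ht : 0 < t) :
    logMean (Real.exp (-t)) 1 = (1 - Real.exp (-t)) / t ∧
    logMean 1 (Real.exp (-t)) = (1 - Real.exp (-t)) / t := by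
  have h1 : Real.exp (-t) < 1 := by simpa using ht
  constructor
  · rw [logMean, if_neg h1.ne, Real.log_exp, Real.log_one, sub_zero, div_neg, ← neg_div, neg_sub]
  · rw [logMean, if_neg h1.ne', Real.log_exp, Real.log_one, zero_sub, neg_neg]

theorem stmt10 (n : ℕ) (hn : 2 ≤ n) (c : ℝ) (hc : 0 < c) :
    (∃ x ∈ {p : EuclideanSpace ℝ (Fin n) | ‖p‖ < 1},
      ∃ y ∈ {p : EuclideanSpace ℝ (Fin n) | ‖p‖ < 1},
      ∃ z ∈ {p : EuclideanSpace ℝ (Fin n) | ‖p‖ < 1},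
        dist x z / (c * logMean (1 - ‖x‖) (1 - ‖z‖)) +
          dist z y / (c * logMean (1 - ‖z‖) (1 - ‖y‖)) <
          dist x y / (c * logMean (1 - ‖x‖) (1 - ‖y‖))) ∧
    (∃ x ∈ {p : EuclideanSpace ℝ (Fin n) | ‖p‖ < 1},
      ∃ y ∈ {p : EuclideanSpace ℝ (Fin n) | ‖p‖ < 1},
      ∃ z ∈ {p : EuclideanSpace ℝ (Fin n) | ‖p‖ < 1},
        Real.log (1 + dist x z / (c * logMean (1 - ‖x‖) (1 - ‖z‖))) +
          Real.log (1 + dist z y / (c * logMean (1 - ‖z‖) (1 - ‖y‖))) <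
          Real.log (1 + dist x y / (c * logMean (1 - ‖x‖) (1 - ‖y‖)))) := by
  obtain ⟨t, ht⟩ : ∃ t : ℝ, t = 3 / c := ⟨_, rfl⟩
  have ht0 : 0 < t := by rw [ht]; positivity
  have hd0 : 0 < Real.exp (-t) := Real.exp_pos _
  have h1 : Real.exp (-t) < 1 := by simpa using ht0
  have hk := key_exp t ht0
  have hct : t / 3 = 1 / c := by rw [ht]; field_simp
  rw [hct] at hk
  obtain ⟨x, hx⟩ : ∃ x : EuclideanSpace ℝ (Fin n), ‖x‖ = 1 - Real.exp (-t) := by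
    refine ⟨EuclideanSpace.single ⟨0, by omega⟩ (1 - Real.exp (-t)), ?_⟩
    rw [EuclideanSpace.norm_single, Real.norm_of_nonneg (by linarith)]
  have hxy : dist x (-x) = 2 * (1 - Real.exp (-t)) := by
    rw [dist_eq_norm, sub_neg_eq_add, ← two_smul ℝ x, norm_smul, hx]; norm_num
  have hx1 : ‖x‖ < 1 := by linarith
  have hA : dist x 0 / (c * logMean (1 - ‖x‖) (1 - ‖(0 : EuclideanSpace ℝ (Fin n))‖)) = t / c := by
    have : 1 - Real.exp (-t) ≠ 0 := by linarith
    rw [dist_zero_right, norm_zero, hx, sub_sub_cancel, sub_zero, (logMean_exp t ht0).1]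
    field_simp
  have hB : dist 0 (-x) / (c * logMean (1 - ‖(0 : EuclideanSpace ℝ (Fin n))‖) (1 - ‖-x‖))
      = t / c := by
    have : 1 - Real.exp (-t) ≠ 0 := by linarith
    rw [dist_zero_left, norm_zero, norm_neg, hx, sub_sub_cancel, sub_zero, (logMean_exp t ht0).2]
    field_simp
  have hC : dist x (-x) / (c * logMean (1 - ‖x‖) (1 - ‖-x‖)) = 2 * (Real.exp t - 1) / c := by
    rw [hxy, norm_neg, hx, sub_sub_cancel, logMean, if_pos rfl, Real.exp_neg]
    have := Real.exp_pos t
    field_simp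
  have hlt : t / c + t / c + t / c * (t / c) < 2 * (Real.exp t - 1) / c := by
    have := div_lt_div_of_pos_right hk hc
    calc _ = (2 * t + t ^ 2 * (1 / c)) / c := by field_simp; ring
      _ < _ := this
  have htc : 0 < t / c := by positivity
  refine ⟨⟨x, hx1, -x, by simpa using hx1, 0, by simp, ?_⟩,
    ⟨x, hx1, -x, by simpa using hx1, 0, by simp, ?_⟩⟩
  · rw [hA, hB, hC]
    nlinarith
  · rw [hA, hB, hC, ← Real.log_mul (by positivity) (by positivity)]
    apply Real.log_lt_log (by positivity)
    nlinarith
end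

section
/- For every c > 0 and all x, y ∈ ℍⁿ = {x ∈ ℝⁿ : xₙ > 0} (n ≥ 2), the inequality (1/(1+c))·T(x,y) ≤ |x−y|/(|x−y| + 2c·L(xₙ, yₙ)) ≤ max{1, 1/c}·T(x,y) holds, where T(x,y) = |x−y|/√(|x−y|² + 4 xₙ yₙ) and L is the logarithmic mean. -/
lemma logMean_aux (u v : ℝ) (hv : 0 < v) (h : v < u) :
    u * v ≤ logMean (u ^ 2) (v ^ 2) ∧ 2 * logMean (u ^ 2) (v ^ 2) ≤ u ^ 2 + v ^ 2 := by
  have hu : 0 < u := hv.trans h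
  have hsq : v ^ 2 < u ^ 2 := by nlinarith
  have hlog : 0 < Real.log (u ^ 2) - Real.log (v ^ 2) :=
    sub_pos.mpr (Real.log_lt_log (by positivity) hsq)
  rw [logMean, if_neg hsq.ne']
  constructor
  · rw [le_div_iff₀ hlog]
    have h1 : 0 ≤ Real.log (u / v) := Real.log_nonneg (by rw [le_div_iff₀ hv]; linarith)
    have h2 := Real.self_le_sinh_iff.mpr h1
    rw [Real.sinh_log (by positivity), Real.log_div hu.ne' hv.ne'] at h2
    rw [Real.log_pow, Real.log_pow]
    push_cast
    have h3 : u * v * ((u / v - (u / v)⁻¹) / 2) = (u ^ 2 - v ^ 2) / 2 := by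
      field_simp
    have h4 := mul_le_mul_of_nonneg_left h2 (mul_pos hu hv).le
    linarith
  · have h1 := Real.le_log_one_add_of_nonneg (x := (u ^ 2 - v ^ 2) / v ^ 2)
      (div_nonneg (by linarith) (by positivity))
    have h2 : 1 + (u ^ 2 - v ^ 2) / v ^ 2 = u ^ 2 / v ^ 2 := by field_simp; ring
    have h3 : 2 * ((u ^ 2 - v ^ 2) / v ^ 2) / ((u ^ 2 - v ^ 2) / v ^ 2 + 2)
        = 2 * (u ^ 2 - v ^ 2) / (u ^ 2 + v ^ 2) := by
      have : (u ^ 2 - v ^ 2) / v ^ 2 + 2 = (u ^ 2 + v ^ 2) / v ^ 2 := by field_simp; ring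
      rw [this]; field_simp
    rw [h2, h3, Real.log_div (by positivity) (by positivity),
      div_le_iff₀ (by positivity)] at h1
    rw [← mul_div_assoc, div_le_iff₀ hlog]
    linarith

lemma logMean_comm' (a b : ℝ) : logMean a b = logMean b a := by
  unfold logMean
  by_cases h : a = b
  · simp [h]
  · rw [if_neg h, if_neg (Ne.symm h), ← neg_sub b a, ← neg_sub (Real.log b), neg_div_neg_eq]

lemma logMean_bounds (a b : ℝ) (ha : 0 < a) (hb : 0 < b) :
    √a * √b ≤ logMean a b ∧ 2 * logMean a b ≤ a + b := by
  rcases lt_trichotomy a b with h | h | h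
  · have := logMean_aux (√b) (√a) (Real.sqrt_pos.mpr ha) (Real.sqrt_lt_sqrt ha.le h)
    rw [Real.sq_sqrt ha.le, Real.sq_sqrt hb.le] at this
    rw [logMean_comm' a b, mul_comm (√a), add_comm a]
    exact this
  · subst h
    simp only [logMean, if_true, Real.mul_self_sqrt ha.le]
    exact ⟨le_rfl, by linarith⟩
  · have := logMean_aux (√a) (√b) (Real.sqrt_pos.mpr hb) (Real.sqrt_lt_sqrt hb.le h)
    rwa [Real.sq_sqrt ha.le, Real.sq_sqrt hb.le] at this

lemma main_real (a b c d : ℝ) (ha : 0 < a) (hb : 0 < b) (hc : 0 < c) (hd : |a - b| ≤ d) :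
    (1 / (1 + c)) * (d / √(d ^ 2 + 4 * a * b)) ≤ d / (d + 2 * c * logMean a b) ∧
    d / (d + 2 * c * logMean a b) ≤ max 1 (1 / c) * (d / √(d ^ 2 + 4 * a * b)) := by
  obtain ⟨h1, h2⟩ := logMean_bounds a b ha hb
  have hd0 : 0 ≤ d := (abs_nonneg _).trans hd
  have hu := Real.sqrt_pos.mpr ha
  have hv := Real.sqrt_pos.mpr hb
  have huv := mul_pos hu hv
  have hab := mul_pos ha hb
  set L := logMean a b
  have hL : 0 < L := huv.trans_le h1
  have hS : 0 < √(d ^ 2 + 4 * a * b) := Real.sqrt_pos.mpr (by nlinarith [sq_nonneg d])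
  have hsq : (a - b) ^ 2 ≤ d ^ 2 := by
    rw [← sq_abs (a - b)]; exact pow_le_pow_left₀ (abs_nonneg _) hd 2
  have hS1 : d ≤ √(d ^ 2 + 4 * a * b) := Real.le_sqrt_of_sq_le (by nlinarith)
  have hS2 : a + b ≤ √(d ^ 2 + 4 * a * b) := Real.le_sqrt_of_sq_le (by nlinarith)
  have hS3 : √(d ^ 2 + 4 * a * b) ≤ d + 2 * (√a * √b) := by
    rw [Real.sqrt_le_left (by positivity)]
    have e : (√a * √b) ^ 2 = a * b := by
      rw [mul_pow, Real.sq_sqrt ha.le, Real.sq_sqrt hb.le]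
    nlinarith [mul_nonneg hd0 huv.le]
  set S := √(d ^ 2 + 4 * a * b)
  have hcL := mul_pos hc hL
  have hD : 0 < d + 2 * c * L := by linarith
  constructor
  · rw [div_mul_div_comm, one_mul]
    apply div_le_div_of_nonneg_left hd0 hD
    nlinarith
  · have key : S ≤ max 1 (1 / c) * (d + 2 * c * L) := by
      have m1 := mul_le_mul_of_nonneg_right (le_max_left 1 (1 / c)) hd0
      have m2 := mul_le_mul_of_nonneg_right (le_max_right 1 (1 / c)) hcL.le
      have : 1 / c * (c * L) = L := by field_simp
      linarith
    rw [← mul_div_assoc, div_le_div_iff₀ hD hS]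
    nlinarith [mul_le_mul_of_nonneg_left key hd0]

theorem stmt16 (n : ℕ) (hn : 2 ≤ n) (c : ℝ) (hc : 0 < c)
    (x y : EuclideanSpace ℝ (Fin n))
    (hx : 0 < x ⟨n - 1, by omega⟩) (hy : 0 < y ⟨n - 1, by omega⟩) :
    (1 / (1 + c)) *
        (dist x y / Real.sqrt (dist x y ^ 2 + 4 * x ⟨n - 1, by omega⟩ * y ⟨n - 1, by omega⟩)) ≤
      dist x y / (dist x y + 2 * c * logMean (x ⟨n - 1, by omega⟩) (y ⟨n - 1, by omega⟩)) ∧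
    dist x y / (dist x y + 2 * c * logMean (x ⟨n - 1, by omega⟩) (y ⟨n - 1, by omega⟩)) ≤
      max 1 (1 / c) *
        (dist x y / Real.sqrt (dist x y ^ 2 + 4 * x ⟨n - 1, by omega⟩ * y ⟨n - 1, by omega⟩)) := by
  apply main_real _ _ c _ hx hy hc
  rw [dist_eq_norm]
  exact PiLp.norm_apply_le (x - y) _
end
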